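/- Let δ ≥ 0, T ≥ 0 and β ≥ 0 be real numbers, let λ be a probability measure on the interval [0,δ], and let g : ℝ → [0,∞] be Borel measurable. Then ∫₀^T e^{βs} (∫_{[0,δ]} g(s+u) dλ(u)) ds ≤ ∫₀^{T+δ} e^{βs} g(s) ds. -/

import Mathlib

open MeasureTheory
open scoped ENNReal Pointwise

/-!
Since `e^{βs}` is nondecreasing and `u ≥ 0`, the weight can be moved inside the average and
evaluated at the shifted time `s + u`. By Tonelli it then suffices to bound, for each fixed `u`, the
`ds`-integral of the shifted function, and translation invariance identifies it with an integral
over the translate of `[0,T]` by `u`, which lies in `[0,T+δ]`.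
-/

section Translation

theorem aemeasurable_comp_add_prod {G : Type*} [Add G] [MeasurableSpace G] [MeasurableAdd₂ G]
    {μ ν : Measure G} [μ.IsAddRightInvariant] [SFinite μ] [SFinite ν]
    {f : G → ℝ≥0∞} (hf : AEMeasurable f μ) :
    AEMeasurable (fun p : G × G ↦ f (p.1 + p.2)) (μ.prod ν) :=
  hf.comp_quasiMeasurePreserving <| QuasiMeasurePreserving.prod_of_left measurable_add <|
    .of_forall fun u ↦ (measurePreserving_add_right μ u).quasiMeasurePreserving

variable {G : Type*} [AddGroup G] [MeasurableSpace G]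
  {μ : Measure G} [μ.IsAddRightInvariant] {A B : Set G}

theorem setLIntegral_comp_add_right_le_of_mapsTo [MeasurableAdd G] {u : G}
    (hu : Set.MapsTo (· + u) A B) (f : G → ℝ≥0∞) :
    ∫⁻ s in A, f (s + u) ∂μ ≤ ∫⁻ s in B, f s ∂μ :=
  calc
    ∫⁻ s in A, f (s + u) ∂μ ≤ ∫⁻ s in (· + u) ⁻¹' B, f (s + u) ∂μ := lintegral_mono_set hu
    _ = ∫⁻ s in B, f s ∂μ :=
      (measurePreserving_add_right μ u).setLIntegral_comp_preimage_emb
        (measurableEmbedding_addRight u) f B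

variable [MeasurableAdd₂ G] [SFinite μ] {ν : Measure G} [SFinite ν]

theorem setLIntegral_setLIntegral_add_le {f : G → ℝ≥0∞} (hf : AEMeasurable f μ) (A B : Set G) :
    ∫⁻ s in A, ∫⁻ u in B, f (s + u) ∂ν ∂μ ≤ ν B * ∫⁻ s in A + B, f s ∂μ := by
  have hf_add : AEMeasurable (fun p : G × G ↦ f (p.1 + p.2))
      ((μ.restrict A).prod (ν.restrict B)) := by
    rw [Measure.prod_restrict]
    exact (aemeasurable_comp_add_prod hf).restrict
  calc
    ∫⁻ s in A, ∫⁻ u in B, f (s + u) ∂ν ∂μ = ∫⁻ u in B, ∫⁻ s in A, f (s + u) ∂μ ∂ν :=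
      lintegral_lintegral_swap hf_add
    _ ≤ ∫⁻ _ in B, ∫⁻ s in A + B, f s ∂μ ∂ν :=
      setLIntegral_mono measurable_const fun _ hu ↦
        setLIntegral_comp_add_right_le_of_mapsTo (fun _ hs ↦ Set.add_mem_add hs hu) f
    _ = ν B * ∫⁻ s in A + B, f s ∂μ := by rw [setLIntegral_const, mul_comm]

theorem lintegral_anticipated_le_general {w g : G → ℝ≥0∞} (hB : MeasurableSet B)
    (hw : ∀ s, ∀ u ∈ B, w s ≤ w (s + u)) (hwg : AEMeasurable (fun s ↦ w s * g s) μ) :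
    ∫⁻ s in A, w s * ∫⁻ u in B, g (s + u) ∂ν ∂μ ≤ ν B * ∫⁻ s in A + B, w s * g s ∂μ := by
  have weight_le (s : G) :
      w s * ∫⁻ u in B, g (s + u) ∂ν ≤ ∫⁻ u in B, w (s + u) * g (s + u) ∂ν :=
    (lintegral_const_mul_le _ _).trans <|
      setLIntegral_mono' hB fun u hu ↦ mul_le_mul_left (hw s u hu) _
  exact (lintegral_mono weight_le).trans (setLIntegral_setLIntegral_add_le hwg A B)

end Translation

/-- Exchange inequality for anticipated terms: for a probability measure `λ`
supported on `[0,δ]` and a Borel measurable `g : ℝ → [0,∞]`,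
`∫₀^T e^{βs} (∫_{[0,δ]} g(s+u) dλ(u)) ds ≤ ∫₀^{T+δ} e^{βs} g(s) ds`. -/
theorem lintegral_anticipated_le (δ T β : ℝ) (hδ : 0 ≤ δ) (hT : 0 ≤ T) (hβ : 0 ≤ β)
    (lam : Measure ℝ) [IsProbabilityMeasure lam] (hsupp : lam (Set.Icc 0 δ)ᶜ = 0)
    (g : ℝ → ENNReal) (hg : Measurable g) :
    ∫⁻ s in Set.Icc (0 : ℝ) T,
        ENNReal.ofReal (Real.exp (β * s)) * ∫⁻ u in Set.Icc (0 : ℝ) δ, g (s + u) ∂lam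
      ≤ ∫⁻ s in Set.Icc (0 : ℝ) (T + δ), ENNReal.ofReal (Real.exp (β * s)) * g s := by
  have weight_mono (s u : ℝ) (hu : u ∈ Set.Icc 0 δ) :
      ENNReal.ofReal (Real.exp (β * s)) ≤ ENNReal.ofReal (Real.exp (β * (s + u))) := by
    gcongr
    exact le_add_of_nonneg_right hu.1
  have Icc_add_subset : Set.Icc 0 T + Set.Icc 0 δ ⊆ Set.Icc 0 (T + δ) := by
    simpa only [add_zero] using Set.Icc_add_Icc_subset 0 T 0 δ
  calc
    _ ≤ lam (Set.Icc 0 δ) *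
          ∫⁻ s in Set.Icc 0 T + Set.Icc 0 δ, ENNReal.ofReal (Real.exp (β * s)) * g s :=
      lintegral_anticipated_le_general measurableSet_Icc weight_mono (by fun_prop)
    _ ≤ 1 * ∫⁻ s in Set.Icc 0 (T + δ), ENNReal.ofReal (Real.exp (β * s)) * g s := by
      gcongr
      exact prob_le_one
    _ = _ := one_mul _
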